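/- Let l ≥ 1 and let P = {P_0,…,P_{l−1}} be a partition of ω into infinite sets with min P_i < min P_j whenever i < j. For every finite Souslin measurable colouring c of 𝓔^{P'}_∞ and every E ∈ 𝓔^{P'}_∞, there exists F ∈ 𝓔^{P'}_∞ with F ≤ E such that c is constant on 𝓔^{P'}_∞ ↾ F = {F' ∈ 𝓔^{P'}_∞ : F' ≤ F}. -/

import Mathlib

open Set

namespace DualRamsey

/-- `F` is a coarsening of `E` (written `F ≤ E` in the paper): every class of `F`
is a union of classes of `E`. -/
def Coarsens {X : Type*} (F E : Setoid X) : Prop := ∀ a b, E.r a b → F.r a b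

/-- The set of equivalence classes of a setoid. -/
def classes {X : Type*} (E : Setoid X) : Set (Set X) := {C | ∃ x, C = {y | E.r x y}}

/-- The set of minimal representatives of the classes of an equivalence relation on ℕ. -/
def minReps (E : Setoid ℕ) : Set ℕ := {n | ∀ m, E.r n m → n ≤ m}

/-- `pRep E k` is `p_k(E)`, the k-th minimal representative in increasing order. -/
noncomputable def pRep (E : Setoid ℕ) (k : ℕ) : ℕ := Nat.nth (· ∈ minReps E) k

/-- `approx n E` is the n-th approximation `r_n(E)`: `E` restricted to `{0,…,p_n(E)-1}`,
identified with its graph. -/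
noncomputable def approx (n : ℕ) (E : Setoid ℕ) : Set (ℕ × ℕ) :=
  {q | q.1 < pRep E n ∧ q.2 < pRep E n ∧ E.r q.1 q.2}

/-- Basic set `[a, E]` relative to a space `S` of equivalence relations. -/
noncomputable def basicSet (S : Set (Setoid ℕ)) (a : Set (ℕ × ℕ)) (E : ↥S) : Set ↥S :=
  {F | Coarsens F.1 E.1 ∧ ∃ n, approx n F.1 = a}

/-- The Ellentuck topology on a space `S` of equivalence relations. -/
noncomputable def ellentuckTop (S : Set (Setoid ℕ)) : TopologicalSpace ↥S :=
  TopologicalSpace.generateFrom {U | ∃ a E, U = basicSet S a E}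

def IsRamsey (S : Set (Setoid ℕ)) (X : Set ↥S) : Prop :=
  ∀ (a : Set (ℕ × ℕ)) (B : ↥S), (basicSet S a B).Nonempty →
    ∃ A ∈ basicSet S a B, basicSet S a A ⊆ X ∨ basicSet S a A ∩ X = ∅

def IsRamseyNull (S : Set (Setoid ℕ)) (X : Set ↥S) : Prop :=
  ∀ (a : Set (ℕ × ℕ)) (B : ↥S), (basicSet S a B).Nonempty →
    ∃ A ∈ basicSet S a B, basicSet S a A ∩ X = ∅

/-- The property of Baire with respect to the Ellentuck topology. -/
noncomputable def HasBP (S : Set (Setoid ℕ)) (X : Set ↥S) : Prop :=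
  ∃ O M : Set ↥S, (ellentuckTop S).IsOpen O ∧ @IsMeagre _ (ellentuckTop S) M ∧
    X = (O \ M) ∪ (M \ O)

/-- The Souslin operation applied to a scheme indexed by finite sequences of naturals. -/
def souslinOp {X : Type*} (A : List ℕ → Set X) : Set X :=
  ⋃ x : ℕ → ℕ, ⋂ n : ℕ, A ((List.range n).map x)

/-- `Y` belongs to the smallest field of sets containing all `t`-open sets and
closed under the Souslin operation. -/
def SouslinMeasurable {X : Type*} (t : TopologicalSpace X) (Y : Set X) : Prop :=
  ∀ 𝒜 : Set (Set X),
    (∀ U, t.IsOpen U → U ∈ 𝒜) →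
    (∀ A ∈ 𝒜, Aᶜ ∈ 𝒜) →
    (∀ A ∈ 𝒜, ∀ B ∈ 𝒜, A ∪ B ∈ 𝒜) →
    (∀ f : List ℕ → Set X, (∀ s, f s ∈ 𝒜) → souslinOp f ∈ 𝒜) →
    Y ∈ 𝒜

/-- The graph of an equivalence relation as a boolean-valued function. -/
noncomputable def graphMap {X : Type*} (E : Setoid X) : X × X → Bool :=
  fun q => @decide (E.r q.1 q.2) (Classical.dec _)

/-- The metrizable topology on a space of equivalence relations, as a subspace of
`2^(X × X)` via graphs. -/
noncomputable def graphTop {X : Type*} (S : Set (Setoid X)) : TopologicalSpace ↥S :=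
  TopologicalSpace.induced (fun E => graphMap E.1) inferInstance



/-- `𝓔^P_∞` for a partition `P` of ℕ into `l` infinite pieces: the `P`-alternating
equivalence relations, i.e. those with infinitely many classes whose k-th minimal
representative lies in `P (k mod l)`. -/
noncomputable def EPalt (l : ℕ) (hl : 0 < l) (P : Fin l → Set ℕ) : Set (Setoid ℕ) :=
  {E | (classes E).Infinite ∧ ∀ k : ℕ, pRep E k ∈ P ⟨k % l, Nat.mod_lt k hl⟩}

/-- `𝓔^{P'}_∞`: the `P`-alternating equivalence relations such that moreover every
class whose minimum lies in `P i` is contained in `⋃_{j ≥ i} P j`. -/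
noncomputable def EPalt' (l : ℕ) (hl : 0 < l) (P : Fin l → Set ℕ) : Set (Setoid ℕ) :=
  {E | E ∈ EPalt l hl P ∧
    ∀ x ∈ minReps E, ∀ i : Fin l, x ∈ P i → ∀ y, E.r x y → ∃ j : Fin l, i ≤ j ∧ y ∈ P j}

/-!
Fix `q : ℕ → ℕ` with `E = ker q` that numbers the classes of `E` in the order of their minima. The
reductions of `E` are the relations `ker (g ∘ q)`, where `g` runs through a monoid of surjections
of `ℕ`, the rigid monoid, and two reductions `ker (g ∘ q)` and `ker (h ∘ g ∘ q)` have the same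
`k`-th approximation as soon as `h` fixes `0, …, k`. The theorem thus becomes a statement about a
monoid and the decreasing sequence of its submonoids `N k` fixing `0, …, k`.

For such a sequence, fusion and a pigeonhole principle imply that the Ramsey sets contain the open
sets (combinatorial forcing) and form a field that is closed under the Souslin operation. Fusion
holds in the rigid monoid because every element factors as `h' * σ`, with `h' ∈ N k` and `σ` one of
finitely many stems, and because infinite products make sense pointwise. Modulo `N (k + 1)`, the
members of `N k` are finite words whose letters are the ways of collapsing a block of `l`
consecutive points to `0, …, k`, so that the pigeonhole principle is the Carlson–Simpson theorem.
-/

/-! ### Ramsey sets of a decreasing sequence of submonoids -/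

section LeftAction

variable {M : Type*} [Monoid M] {H : Submonoid M} {D D' : M → Prop} {X Y : Set M} {A : M}

/-- A property of elements of `M` is hereditary if it survives left multiplication by `H`. -/
def LeftHereditary (H : Submonoid M) (D : M → Prop) : Prop :=
  ∀ A, D A → ∀ h ∈ H, D (h * A)

/-- A property is cofinal if every element acquires it after left multiplication by a member
of `H`; elements of `M` play the role of conditions, `h * A` being stronger than `A`. -/
def LeftCofinal (H : Submonoid M) (D : M → Prop) : Prop :=
  ∀ A, ∃ g ∈ H, D (g * A)

/-- The whole orbit of `A` under left multiplication by `H` lies in `X`. -/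
def Accepts (H : Submonoid M) (X : Set M) (A : M) : Prop :=
  ∀ h ∈ H, h * A ∈ X

/-- The orbit of `A` under left multiplication by `H` does not split `X`. -/
def Decides (H : Submonoid M) (X : Set M) (A : M) : Prop :=
  Accepts H X A ∨ Accepts H Xᶜ A

theorem LeftHereditary.or (hD : LeftHereditary H D) (hD' : LeftHereditary H D') :
    LeftHereditary H (fun A => D A ∨ D' A) :=
  fun A hA h hh => hA.imp (hD A · h hh) (hD' A · h hh)

theorem leftHereditary_forall_mul (H : Submonoid M) (D : M → Prop) :
    LeftHereditary H (fun A => ∀ h ∈ H, D (h * A)) := fun A hA g hg h hh => by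
  rw [← mul_assoc]
  exact hA _ (H.mul_mem hh hg)

theorem leftHereditary_accepts (H : Submonoid M) (X : Set M) : LeftHereditary H (Accepts H X) :=
  leftHereditary_forall_mul H (· ∈ X)

theorem leftHereditary_decides (H : Submonoid M) (X : Set M) : LeftHereditary H (Decides H X) :=
  (leftHereditary_accepts H X).or (leftHereditary_accepts H Xᶜ)

theorem LeftCofinal.forall_finite {ι : Type*} [Finite ι] {D : ι → M → Prop}
    (hH : ∀ i, LeftHereditary H (D i)) (hD : ∀ i, LeftCofinal H (D i)) :
    LeftCofinal H (fun A => ∀ i, D i A) := by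
  intro A
  suffices h : ∀ s : Set ι, s.Finite → ∃ g ∈ H, ∀ i ∈ s, D i (g * A) by
    simpa using h univ finite_univ
  intro s hs
  induction s, hs using Set.Finite.induction_on with
  | empty => exact ⟨1, H.one_mem, by simp⟩
  | @insert i s _ _ ih =>
    obtain ⟨g, hg, hgs⟩ := ih
    obtain ⟨g', hg', hgi⟩ := hD i (g * A)
    refine ⟨g' * g, H.mul_mem hg' hg, ?_⟩
    rw [mul_assoc]
    exact forall_mem_insert.2 ⟨hgi, fun j hj => hH j _ (hgs j hj) g' hg'⟩

theorem LeftCofinal.mono (hD : LeftCofinal H D) (h : ∀ A, D A → D' A) : LeftCofinal H D' :=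
  fun A => (hD A).imp fun _ hg => hg.imp_right (h _)

theorem LeftCofinal.and (hD : LeftCofinal H D) (hH : LeftHereditary H D)
    (hD' : LeftCofinal H D') : LeftCofinal H (fun A => D A ∧ D' A) := by
  intro A
  obtain ⟨g, hg, hgA⟩ := hD A
  obtain ⟨g', hg', hgA'⟩ := hD' (g * A)
  refine ⟨g' * g, H.mul_mem hg' hg, ?_⟩
  rw [mul_assoc]
  exact ⟨hH _ hgA g' hg', hgA'⟩

theorem Accepts.mem (h : Accepts H X A) : A ∈ X := by
  simpa only [one_mul] using h 1 H.one_mem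

theorem Accepts.mono (h : Accepts H X A) (hXY : X ⊆ Y) : Accepts H Y A :=
  fun g hg => hXY (h g hg)

theorem Accepts.anti {H' : Submonoid M} (h : Accepts H X A) (hH : H' ≤ H) : Accepts H' X A :=
  fun g hg => h g (hH hg)

theorem Decides.compl (h : Decides H X A) : Decides H Xᶜ A := by
  rw [Decides, compl_compl]
  exact h.symm

theorem Decides.union (hX : Decides H X A) (hY : Decides H Y A) : Decides H (X ∪ Y) A := by
  rcases hX with hX | hX
  · exact .inl (hX.mono subset_union_left)
  rcases hY with hY | hY
  · exact .inl (hY.mono subset_union_right)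
  · exact .inr fun h hh hXY => hXY.elim (hX h hh) (hY h hh)

end LeftAction

section RamseySequence

open scoped Topology

variable {M : Type*} [Monoid M] {N : ℕ → Submonoid M} {X Y : Set M}

/-- Fusion: cofinally often at level `k`, the `k'`-th of a sequence of hereditary cofinal
properties holds along the whole `N k`-orbit, simultaneously for all `k' ≥ k`. -/
def HasFusion (N : ℕ → Submonoid M) : Prop :=
  ∀ D : ℕ → M → Prop, (∀ k, LeftHereditary (N k) (D k)) → (∀ k, LeftCofinal (N k) (D k)) →
    ∀ k, LeftCofinal (N k) (fun A => ∀ k' ≥ k, ∀ h ∈ N k, D k' (h * A))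

/-- Pigeonhole: a colouring of `N k` that only depends on the coset modulo `N (k + 1)` is
constant on some left ideal `N k * g` of `N k`. -/
def HasPigeonhole (N : ℕ → Submonoid M) : Prop :=
  ∀ (k : ℕ) (χ : Set M), (∀ h ∈ N k, ∀ h' ∈ N (k + 1), (h' * h ∈ χ ↔ h ∈ χ)) →
    ∃ g ∈ N k, Decides (N k) χ g

/-- The monoid form of a topological Ramsey space: `M` is the set of reductions of a fixed
element of the space, and `N k * A` is the basic set of reductions of `A` that have the same
`k`-th approximation as `A`. -/
structure IsRamseySequence (N : ℕ → Submonoid M) : Prop where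
  antitone : Antitone N
  fusion : HasFusion N
  pigeonhole : HasPigeonhole N

/-- `X` is (completely) Ramsey: every basic set `N k * A` contains some `N k * (g * A)` that is
contained in or disjoint from `X`. -/
def RamseyFor (N : ℕ → Submonoid M) (X : Set M) : Prop :=
  ∀ k, LeftCofinal (N k) (Decides (N k) X)

/-- `X` is Ramsey null: every basic set `N k * A` contains some `N k * (g * A)` that is disjoint
from `X`. -/
def RamseyNullFor (N : ℕ → Submonoid M) (X : Set M) : Prop :=
  ∀ k, LeftCofinal (N k) (Accepts (N k) Xᶜ)

theorem HasFusion.leftCofinal_forall_exists (hN : HasFusion N) {ι : Type*} [Countable ι]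
    {D : ι → ℕ → M → Prop} (hH : ∀ i k, LeftHereditary (N k) (D i k))
    (hD : ∀ i k, LeftCofinal (N k) (D i k)) (k : ℕ) :
    LeftCofinal (N k) (fun A => ∀ h ∈ N k, ∀ i, ∃ k', D i k' (h * A)) := by
  obtain ⟨e, he⟩ := exists_injective_nat ι
  have hfin (k : ℕ) : Finite {i // e i ≤ k} := ((finite_Iic k).preimage he.injOn).to_subtype
  refine (hN (fun k A => ∀ i : {i // e i ≤ k}, D i k A)
    (fun k A hA h hh i => hH i k A (hA i) h hh)
    (fun k => LeftCofinal.forall_finite (fun i => hH i k) (fun i => hD i k)) k).mono ?_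
  exact fun A hA h hh i =>
    ⟨max (e i) k, hA _ (le_max_right _ _) h hh ⟨i, le_max_left _ _⟩⟩

theorem RamseyNullFor.mono (hY : RamseyNullFor N Y) (hXY : X ⊆ Y) : RamseyNullFor N X :=
  fun k => (hY k).mono fun _ hA => hA.mono (compl_subset_compl.2 hXY)

theorem RamseyNullFor.iUnion (hN : HasFusion N) {ι : Type*} [Countable ι] {X : ι → Set M}
    (hX : ∀ i, RamseyNullFor N (X i)) : RamseyNullFor N (⋃ i, X i) := by
  intro k
  refine (hN.leftCofinal_forall_exists (fun i k => leftHereditary_accepts (N k) (X i)ᶜ) hX k).mono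
    fun A hA h hh hmem => ?_
  obtain ⟨i, hi⟩ := mem_iUnion.1 hmem
  obtain ⟨k', hk'⟩ := hA h hh i
  exact hk'.mem hi

theorem RamseyFor.compl (hX : RamseyFor N X) : RamseyFor N Xᶜ :=
  fun k => (hX k).mono fun _ => Decides.compl

theorem RamseyFor.union (hX : RamseyFor N X) (hY : RamseyFor N Y) : RamseyFor N (X ∪ Y) :=
  fun k => ((hX k).and (leftHereditary_decides _ _) (hY k)).mono fun _ hA => hA.1.union hA.2

theorem RamseyFor.inter (hX : RamseyFor N X) (hY : RamseyFor N Y) : RamseyFor N (X ∩ Y) := by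
  simpa only [compl_union, compl_compl] using (hX.compl.union hY.compl).compl

theorem RamseyFor.diff (hX : RamseyFor N X) (hY : RamseyFor N Y) : RamseyFor N (X \ Y) :=
  hX.inter hY.compl

theorem RamseyFor.of_symmDiff_null (hY : RamseyFor N Y) (hXY : RamseyNullFor N (symmDiff X Y)) :
    RamseyFor N X := by
  intro k
  refine ((hXY k).and (leftHereditary_accepts _ _) (hY k)).mono fun A hA => ?_
  have agree : ∀ h ∈ N k, (h * A ∈ X ↔ h * A ∈ Y) := fun h hh => by
    have := hA.1 h hh
    rw [mem_compl_iff, mem_symmDiff] at this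
    tauto
  exact hA.2.imp (fun hacc h hh => (agree h hh).2 (hacc h hh))
    (fun hacc h hh hX => hacc h hh ((agree h hh).1 hX))

theorem RamseyFor.leftCofinal_exists_accepts_fiber {κ : Type*} [Finite κ] {c : M → κ}
    (hc : ∀ i, RamseyFor N (c ⁻¹' {i})) (k : ℕ) :
    LeftCofinal (N k) (fun A => ∃ i, Accepts (N k) (c ⁻¹' {i}) A) := by
  refine (LeftCofinal.forall_finite
    (fun i => leftHereditary_decides (N k) (c ⁻¹' {i})) (fun i => hc i k)).mono fun A hA => ?_
  exact ⟨c A, (hA (c A)).resolve_right fun h => h.mem rfl⟩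

/-- `A` rejects `X` if no reduction of `A` accepts it (combinatorial forcing). -/
def Rejects (H : Submonoid M) (X : Set M) (A : M) : Prop :=
  ∀ g ∈ H, ¬ Accepts H X (g * A)

theorem leftHereditary_rejects (H : Submonoid M) (X : Set M) : LeftHereditary H (Rejects H X) :=
  leftHereditary_forall_mul H (¬ Accepts H X ·)

theorem Rejects.not_accepts {H : Submonoid M} {A : M} (h : Rejects H X A) : ¬ Accepts H X A := by
  simpa only [one_mul] using h 1 H.one_mem

theorem leftCofinal_accepts_or_rejects (H : Submonoid M) (X : Set M) :
    LeftCofinal H (fun A => Accepts H X A ∨ Rejects H X A) := by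
  intro A
  by_cases hA : Rejects H X A
  · exact ⟨1, H.one_mem, by rw [one_mul]; exact .inr hA⟩
  · rw [Rejects] at hA
    push Not at hA
    exact hA.imp fun g hg => hg.imp_right .inl

namespace IsRamseySequence

theorem leftCofinal_accepts_or_forall_rejects_succ (hN : IsRamseySequence N) (X : Set M) (k : ℕ) :
    LeftCofinal (N k)
      (fun A => Accepts (N k) X A ∨ ∀ h ∈ N k, Rejects (N (k + 1)) X (h * A)) := by
  intro A
  obtain ⟨g, hg, hgA⟩ := hN.fusion (fun k A => Accepts (N k) X A ∨ Rejects (N k) X A)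
    (fun k => (leftHereditary_accepts _ _).or (leftHereditary_rejects _ _))
    (fun k => leftCofinal_accepts_or_rejects _ _) k A
  have decided : ∀ h ∈ N k, Accepts (N (k + 1)) X (h * (g * A)) ∨
      Rejects (N (k + 1)) X (h * (g * A)) := hgA (k + 1) k.le_succ
  obtain ⟨g', hg', hχ⟩ := hN.pigeonhole k {h | Accepts (N (k + 1)) X (h * (g * A))} <| by
    intro h hh h' hh'
    rw [mem_ofPred_eq, mem_ofPred_eq, mul_assoc]
    exact ⟨fun hacc => (decided h hh).resolve_right fun hrej => hrej h' hh' hacc,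
      fun hacc => leftHereditary_accepts _ _ _ hacc h' hh'⟩
  refine ⟨g' * g, (N k).mul_mem hg' hg, ?_⟩
  have assoc (h : M) : h * (g' * g * A) = h * g' * (g * A) := by simp only [mul_assoc]
  refine hχ.imp (fun hacc h hh => ?_) (fun hrej h hh => ?_)
  · rw [assoc]
    exact (hacc h hh).mem
  · rw [assoc]
    exact (decided _ ((N k).mul_mem hh hg')).resolve_left (hrej h hh)

/-- The Ellentuck topology of a Ramsey sequence, with basic open sets `N k * A`. -/
abbrev topology (hN : IsRamseySequence N) : TopologicalSpace M where
  IsOpen X := ∀ A ∈ X, ∃ k, Accepts (N k) X A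
  isOpen_univ _ _ := ⟨0, fun _ _ => mem_univ _⟩
  isOpen_inter X Y hX hY A hA := by
    obtain ⟨m, hm⟩ := hX A hA.1
    obtain ⟨n, hn⟩ := hY A hA.2
    exact ⟨max m n, fun h hh => ⟨hm h (hN.antitone (le_max_left _ _) hh),
      hn h (hN.antitone (le_max_right _ _) hh)⟩⟩
  isOpen_sUnion S hS A := fun ⟨X, hX, hA⟩ =>
    (hS X hX A hA).imp fun _ hk => hk.mono (subset_sUnion_of_mem hX)

theorem ramseyFor_of_isOpen (hN : IsRamseySequence N) (hX : IsOpen[hN.topology] X) :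
    RamseyFor N X := by
  intro k A
  obtain ⟨g, hg, hgA⟩ := hN.fusion _
    (fun k => (leftHereditary_accepts (N k) X).or (leftHereditary_forall_mul _ _))
    (hN.leftCofinal_accepts_or_forall_rejects_succ X) k A
  refine ⟨g, hg, or_iff_not_imp_left.2 fun hnot => ?_⟩
  have rejects (n : ℕ) : ∀ h ∈ N k, Rejects (N (k + n + 1)) X (h * (g * A)) := by
    induction n with
    | zero =>
      have h1 := hgA k le_rfl 1 (N k).one_mem
      rw [one_mul] at h1
      exact h1.resolve_left hnot
    | succ n ih =>
      intro h hh
      have h1 := (hgA (k + n + 1) (by omega) h hh).resolve_left (ih h hh).not_accepts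
        1 (Submonoid.one_mem _)
      rwa [one_mul] at h1
  intro h hh hmem
  obtain ⟨n, hn⟩ := hX _ hmem
  exact (rejects n h hh).not_accepts (hn.anti (hN.antitone (by omega)))

theorem ramseyFor_iUnion (hN : IsRamseySequence N) {ι : Type*} [Countable ι] {X : ι → Set M}
    (hX : ∀ i, RamseyFor N (X i)) : RamseyFor N (⋃ i, X i) := by
  let O : Set M := {B | ∃ i k, Accepts (N k) (X i) B}
  have hO : RamseyFor N O := hN.ramseyFor_of_isOpen fun B ⟨i, k, hB⟩ =>
    ⟨k, fun h hh => ⟨i, k, leftHereditary_accepts _ _ _ hB h hh⟩⟩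
  have hOX : O ⊆ ⋃ i, X i := fun B ⟨i, k, hB⟩ => mem_iUnion.2 ⟨i, hB.mem⟩
  refine hO.of_symmDiff_null fun k => ?_
  refine (hN.fusion.leftCofinal_forall_exists
    (fun i k => leftHereditary_decides (N k) (X i)) hX k).mono fun A hA h hh hmem => ?_
  obtain ⟨hmem, hnot⟩ := hmem.resolve_right fun hmem => hmem.2 (hOX hmem.1)
  obtain ⟨i, hi⟩ := mem_iUnion.1 hmem
  obtain ⟨k', hk'⟩ := hA h hh i
  exact hnot ⟨i, k', hk'.resolve_right fun hacc => hacc.mem hi⟩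

theorem ramseyFor_closure (hN : IsRamseySequence N) (X : Set M) :
    RamseyFor N (@closure _ hN.topology X) := by
  let := hN.topology
  simpa only [compl_compl] using (hN.ramseyFor_of_isOpen isClosed_closure.isOpen_compl).compl

theorem exists_mul_mem_of_mem_closure (hN : IsRamseySequence N) {A : M}
    (hA : A ∈ @closure _ hN.topology X) (k : ℕ) : ∃ h ∈ N k, h * A ∈ X := by
  let := hN.topology
  have open_orbit : IsOpen {B | ∃ h ∈ N k, B = h * A} := fun B ⟨h, hh, hB⟩ =>
    ⟨k, fun g hg => ⟨g * h, (N k).mul_mem hg hh, by rw [hB, mul_assoc]⟩⟩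
  obtain ⟨_, ⟨h, hh, rfl⟩, hX⟩ :=
    mem_closure_iff.1 hA _ open_orbit ⟨1, (N k).one_mem, (one_mul A).symm⟩
  exact ⟨h, hh, hX⟩

theorem ramseyNullFor_of_subset_closure (hN : IsRamseySequence N) (hY : RamseyFor N Y)
    (hYX : Y ⊆ @closure _ hN.topology X) (hdisj : Disjoint X Y) : RamseyNullFor N Y := by
  intro k
  refine (hY k).mono fun A hA => hA.resolve_left fun hacc => ?_
  obtain ⟨h, hh, hX⟩ := hN.exists_mul_mem_of_mem_closure (hYX hacc.mem) k
  exact disjoint_left.1 hdisj hX (hacc h hh)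

end IsRamseySequence

end RamseySequence

/-! ### The Souslin operation -/

section Souslin

open scoped Topology

variable {α : Type*}

/-- The part of `souslinOp f` that is contributed by the branches through `s`. -/
def branchSet (f : List ℕ → Set α) (s : List ℕ) : Set α :=
  {a | ∃ x : ℕ → ℕ, (List.range s.length).map x = s ∧ ∀ n, a ∈ f ((List.range n).map x)}

theorem branchSet_nil (f : List ℕ → Set α) : branchSet f [] = souslinOp f := by
  ext a
  simp [branchSet, souslinOp]

theorem branchSet_subset (f : List ℕ → Set α) (s : List ℕ) : branchSet f s ⊆ f s := by
  rintro a ⟨x, hx, ha⟩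
  rw [← hx]
  exact ha s.length

theorem branchSet_subset_iUnion (f : List ℕ → Set α) (s : List ℕ) :
    branchSet f s ⊆ ⋃ n, branchSet f (s ++ [n]) := by
  rintro a ⟨x, hx, ha⟩
  exact mem_iUnion.2 ⟨x s.length, x, by simp [List.range_succ, hx], ha⟩

theorem diff_souslinOp_subset_iUnion {f Y : List ℕ → Set α} (hY : ∀ s, Y s ⊆ f s) :
    Y [] \ souslinOp f ⊆ ⋃ s, (Y s \ ⋃ n, Y (s ++ [n])) := by
  rintro a ⟨ha, hnot⟩
  by_contra hgap
  have extend : ∀ s, a ∈ Y s → ∃ n, a ∈ Y (s ++ [n]) := by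
    simpa only [mem_iUnion, mem_sdiff, not_exists, not_and, not_forall, not_not] using hgap
  choose! next hnext using extend
  let branch : ℕ → List ℕ := fun n => n.rec [] fun _ s => s ++ [next s]
  have mem_branch (n : ℕ) : a ∈ Y (branch n) := by
    induction n with
    | zero => exact ha
    | succ n ih => exact hnext _ ih
  have map_branch (n : ℕ) : (List.range n).map (next ∘ branch) = branch n := by
    induction n with
    | zero => rfl
    | succ n ih => rw [List.range_succ, List.map_append, ih]; rfl
  refine hnot (mem_iUnion.2 ⟨next ∘ branch, mem_iInter.2 fun n => ?_⟩)
  rw [map_branch]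
  exact hY _ (mem_branch n)

theorem preimage_souslinOp {β : Type*} (φ : β → α) (f : List ℕ → Set α) :
    φ ⁻¹' souslinOp f = souslinOp (fun s => φ ⁻¹' f s) := by
  simp only [souslinOp, preimage_iUnion, preimage_iInter]

variable {M : Type*} [Monoid M] {N : ℕ → Submonoid M}

theorem IsRamseySequence.ramseyFor_souslinOp (hN : IsRamseySequence N) {f : List ℕ → Set M}
    (hf : ∀ s, RamseyFor N (f s)) : RamseyFor N (souslinOp f) := by
  -- `Y s` is a Ramsey envelope of `branchSet f s`; passing to the envelopes changes
  -- `souslinOp f` by at most the countably many null sets `Y s \ ⋃ n, Y (s ++ [n])`.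
  let Y : List ℕ → Set M := fun s => @closure _ hN.topology (branchSet f s) ∩ f s
  have hY (s) : RamseyFor N (Y s) := (hN.ramseyFor_closure _).inter (hf s)
  have branch_subset (s) : branchSet f s ⊆ Y s :=
    subset_inter (@subset_closure _ hN.topology _) (branchSet_subset f s)
  have gap_null (s) : RamseyNullFor N (Y s \ ⋃ n, Y (s ++ [n])) := by
    refine hN.ramseyNullFor_of_subset_closure ((hY s).diff (hN.ramseyFor_iUnion fun n => hY _))
      (X := branchSet f s) (fun A hA => hA.1.1) (disjoint_left.2 fun A hA hgap => hgap.2 ?_)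
    exact iUnion_mono (fun n => branch_subset _) (branchSet_subset_iUnion f s hA)
  refine (hY []).of_symmDiff_null ((RamseyNullFor.iUnion hN.fusion gap_null).mono ?_)
  rintro A (⟨hA, hnot⟩ | hA)
  · exact absurd (branch_subset [] ((branchSet_nil f).symm ▸ hA)) hnot
  · exact diff_souslinOp_subset_iUnion (fun s => inter_subset_right) hA

theorem SouslinMeasurable.ramseyFor_preimage {t : TopologicalSpace α} {Y : Set α}
    (hY : SouslinMeasurable t Y) (hN : IsRamseySequence N) {φ : M → α}
    (hφ : Continuous[hN.topology, t] φ) : RamseyFor N (φ ⁻¹' Y) := by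
  let := hN.topology
  refine hY {Y | RamseyFor N (φ ⁻¹' Y)}
    (fun U hU => hN.ramseyFor_of_isOpen (hφ.isOpen_preimage U hU))
    (fun _ => RamseyFor.compl) (fun _ hA _ => RamseyFor.union hA) fun f hf => ?_
  rw [mem_ofPred_eq, preimage_souslinOp]
  exact hN.ramseyFor_souslinOp hf

end Souslin

/-! ### The Carlson–Simpson theorem -/

section CarlsonSimpson

attribute [local instance] Ultrafilter.mul Ultrafilter.semigroup

open FreeMonoid (of)

theorem exists_minimal_leftIdeal {S : Type*} [Nonempty S] [Semigroup S] [TopologicalSpace S]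
    [CompactSpace S] [T2Space S] (hS : ∀ r : S, Continuous (· * r)) :
    ∃ L : Set S, L.Nonempty ∧ (∀ p, ∀ q ∈ L, p * q ∈ L) ∧ ∀ q ∈ L, ∀ r ∈ L, ∃ p, p * q = r := by
  let closedLeftIdeals : Set (Set S) :=
    {L | IsClosed L ∧ L.Nonempty ∧ ∀ p, ∀ q ∈ L, p * q ∈ L}
  have chain_inter_mem {c} (hcS : c ⊆ closedLeftIdeals) (hc : IsChain (· ⊆ ·) c)
      (hne : c.Nonempty) : ⋂₀ c ∈ closedLeftIdeals := by
    have := hne.to_subtype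
    exact ⟨isClosed_sInter fun L hL => (hcS hL).1,
      IsCompact.nonempty_sInter_of_directed_nonempty_isCompact_isClosed
        (IsChain.directedOn hc.symm) (fun L hL => (hcS hL).2.1)
        (fun L hL => (hcS hL).1.isCompact) (fun L hL => (hcS hL).1),
      fun p q hq L hL => (hcS hL).2.2 p q (hq L hL)⟩
  obtain ⟨L, -, hL⟩ := zorn_superset_nonempty closedLeftIdeals
    (fun c hcS hc hne => ⟨⋂₀ c, chain_inter_mem hcS hc hne, fun _ => sInter_subset_of_mem⟩)
    univ ⟨isClosed_univ, univ_nonempty, fun _ _ _ => mem_univ _⟩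
  obtain ⟨-, hne, hmul⟩ := hL.prop
  refine ⟨L, hne, hmul, fun q hq r hr => ?_⟩
  have range_eq : range (· * q) = L := by
    refine hL.eq_of_subset ⟨(isCompact_range (hS q)).isClosed, range_nonempty _, ?_⟩ ?_
    · rintro p _ ⟨r, rfl⟩
      exact ⟨p * r, mul_assoc p r q⟩
    · rintro _ ⟨p, rfl⟩
      exact hmul p q hq
  rwa [← range_eq] at hr

theorem ultrafilter_map_mul {S T F : Type*} [Mul S] [Mul T] [FunLike F S T] [MulHomClass F S T]
    (f : F) (U V : Ultrafilter S) : (U * V).map f = U.map f * V.map f := by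
  refine Ultrafilter.coe_inj.1 (Filter.ext' fun p => ?_)
  simp only [Ultrafilter.coe_map, Filter.eventually_map, Ultrafilter.eventually_mul, map_mul]

variable {Λ : Type*}

/-- Substitution of the letter `a` for the variable `none` in a word with a single variable. -/
def subst (a : Λ) : FreeMonoid (Option Λ) →* FreeMonoid Λ := FreeMonoid.map (·.getD a)

/-- The words that start with the variable. -/
def leftVariableWords (Λ : Type*) : Set (FreeMonoid (Option Λ)) := range (of none * ·)

theorem mul_mem_leftVariableWords {v : FreeMonoid (Option Λ)} (hv : v ∈ leftVariableWords Λ)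
    (w : FreeMonoid (Option Λ)) : v * w ∈ leftVariableWords Λ := by
  obtain ⟨t, rfl⟩ := hv
  exact ⟨t * w, (mul_assoc _ _ _).symm⟩

-- `V` is an idempotent below a minimal left ideal of ultrafilters on variable-free words;
-- minimality makes the substitution instances `V.map (subst a)` absorb each other.
theorem exists_absorbing_ultrafilter (Λ : Type*) : ∃ V : Ultrafilter (FreeMonoid (Option Λ)),
    leftVariableWords Λ ∈ V ∧ ∀ a b : Λ, V.map (subst a) * V.map (subst b) = V.map (subst a) := by
  obtain ⟨L, ⟨U, hU⟩, hmul, hmin⟩ :=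
    exists_minimal_leftIdeal (Ultrafilter.continuous_mul_left (M := FreeMonoid Λ))
  let U' : Ultrafilter (FreeMonoid (Option Λ)) := U.map (FreeMonoid.map some)
  have map_U' (a : Λ) : U'.map (subst a) = U := by
    have : subst a ∘ FreeMonoid.map some = id := by
      funext w
      exact FreeMonoid.map_map.trans (congrFun (congrArg _ FreeMonoid.map_id) w)
    rw [Ultrafilter.map_map, this, Ultrafilter.map_id]
  let Y : Set (Ultrafilter (FreeMonoid (Option Λ))) :=
    {q | leftVariableWords Λ ∈ q} ∩ range (· * U')
  have Y_compact : IsCompact Y := (ultrafilter_isClosed_basic _).isCompact.inter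
    (isCompact_range (Ultrafilter.continuous_mul_left U'))
  have Y_nonempty : Y.Nonempty := ⟨pure (of none) * U', (Ultrafilter.eventually_mul _ _ _).2
    (Filter.eventually_pure.2 (.of_forall fun w => ⟨w, rfl⟩)), _, rfl⟩
  have Y_mul : ∀ q ∈ Y, ∀ r ∈ Y, q * r ∈ Y := by
    rintro q ⟨hq, -⟩ _ ⟨-, s, rfl⟩
    exact ⟨(Ultrafilter.eventually_mul _ _ _).2 <| Filter.Eventually.mono hq fun v hv =>
      .of_forall (mul_mem_leftVariableWords hv), q * s, mul_assoc _ _ _⟩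
  obtain ⟨V, ⟨hvar, p, rfl⟩, hidem⟩ := exists_idempotent_in_compact_subsemigroup
    Ultrafilter.continuous_mul_left Y Y_nonempty Y_compact Y_mul
  have map_mem (a : Λ) : (p * U').map (subst a) ∈ L := by
    rw [ultrafilter_map_mul, map_U']
    exact hmul _ _ hU
  refine ⟨p * U', hvar, fun a b => ?_⟩
  obtain ⟨q, hq⟩ := hmin _ (map_mem b) _ (map_mem a)
  rw [← hq, mul_assoc, ← ultrafilter_map_mul, hidem]

/-- A word is extendable if it lies in `R` and, for every letter `a`, almost every substitution
of `a` in a variable word can be appended to it without leaving `R`. -/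
def Extendable (V : Ultrafilter (FreeMonoid (Option Λ))) (R : Set (FreeMonoid Λ))
    (w : FreeMonoid Λ) : Prop :=
  w ∈ R ∧ ∀ a, ∀ᶠ v in V, w * subst a v ∈ R

variable {V : Ultrafilter (FreeMonoid (Option Λ))} {R : Set (FreeMonoid Λ)}

theorem eventually_extendable [Finite Λ]
    (hV : ∀ a b, V.map (subst a) * V.map (subst b) = V.map (subst a)) {a : Λ} {w : FreeMonoid Λ}
    (h : ∀ᶠ v in V, w * subst a v ∈ R) : ∀ᶠ v in V, Extendable V R (w * subst a v) := by
  refine h.and (Filter.eventually_all.2 fun b => ?_)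
  have h' : ∀ᶠ u in V.map (subst a), w * u ∈ R := h
  rw [← hV a b, Ultrafilter.eventually_mul] at h'
  simpa only [mul_assoc, Ultrafilter.coe_map, Filter.eventually_map] using h'

theorem exists_mul_extendable [Finite Λ] (hvar : leftVariableWords Λ ∈ V)
    (hV : ∀ a b, V.map (subst a) * V.map (subst b) = V.map (subst a)) {W : Set (FreeMonoid Λ)}
    (hW : W.Finite) (hWR : ∀ w ∈ W, Extendable V R w) :
    ∃ v ∈ leftVariableWords Λ, ∀ w ∈ W, ∀ a, Extendable V R (w * subst a v) := by
  refine (Filter.Eventually.and hvar <| (Filter.eventually_all_finite hW).2 fun w hw =>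
    Filter.eventually_all.2 fun a => eventually_extendable hV ((hWR w hw).2 a)).exists

/-- Substitution of the letters `a n` for the variables `inr n` in a word with variables. -/
def fill (a : ℕ → Λ) : FreeMonoid (Λ ⊕ ℕ) →* FreeMonoid Λ := FreeMonoid.map (Sum.elim id a)

/-- Renaming of the variable `none` to `inr n`. -/
def rename (n : ℕ) : FreeMonoid (Option Λ) →* FreeMonoid (Λ ⊕ ℕ) :=
  FreeMonoid.map (·.elim (.inr n) .inl)

theorem fill_rename (a : ℕ → Λ) (n : ℕ) (v : FreeMonoid (Option Λ)) :
    fill a (rename n v) = subst (a n) v := by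
  have : Sum.elim id a ∘ (fun o : Option Λ => o.elim (.inr n) .inl) = (·.getD (a n)) := by
    funext o
    cases o <;> rfl
  rw [fill, rename, FreeMonoid.map_map, this, subst]

theorem finite_range_fill [Finite Λ] (p : FreeMonoid (Λ ⊕ ℕ)) : (range (fill · p)).Finite :=
  (List.finite_length_eq Λ p.length).subset <| range_subset_iff.2 fun _ => List.length_map _

/-- A word in the letters `Λ` and the variables `inr v` for `v < n`, all of whose instances are
extendable. -/
def VariableExtendable (V : Ultrafilter (FreeMonoid (Option Λ))) (R : Set (FreeMonoid Λ)) (n : ℕ)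
    (p : FreeMonoid (Λ ⊕ ℕ)) : Prop :=
  (∀ v, Sum.inr v ∈ p → v < n) ∧ ∀ a, Extendable V R (fill a p)

theorem VariableExtendable.exists_succ [Finite Λ] (hvar : leftVariableWords Λ ∈ V)
    (hV : ∀ a b, V.map (subst a) * V.map (subst b) = V.map (subst a)) {n : ℕ}
    {p : FreeMonoid (Λ ⊕ ℕ)} (hp : VariableExtendable V R n p) :
    ∃ t, VariableExtendable V R (n + 1) (p * (of (.inr n) * t)) := by
  obtain ⟨_, ⟨t, rfl⟩, ht⟩ :=
    exists_mul_extendable hvar hV (finite_range_fill p) (forall_mem_range.2 hp.2)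
  have rename_eq : of (.inr n) * rename n t = rename n (of none * t) :=
    (map_mul (rename n) (of none) t).symm
  refine ⟨rename n t, fun v hv => ?_, fun a => ?_⟩
  · rw [rename_eq, FreeMonoid.mem_mul, rename, FreeMonoid.mem_map] at hv
    rcases hv with hv | ⟨_ | o, -, hv⟩
    · exact Nat.lt_succ_of_lt (hp.1 v hv)
    · exact (Sum.inr_injective hv).symm ▸ n.lt_succ_self
    · exact absurd hv Sum.inl_ne_inr
  · rw [rename_eq, map_mul, fill_rename]
    exact ht _ ⟨a, rfl⟩ (a n)

theorem exists_variableExtendable_zero {w : FreeMonoid Λ} (hw : Extendable V R w) :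
    ∃ p, VariableExtendable V R 0 p := by
  refine ⟨FreeMonoid.map .inl w, fun v hv => ?_, fun a => ?_⟩
  · obtain ⟨_, -, hv⟩ := FreeMonoid.mem_map.1 hv
    exact absurd hv Sum.inl_ne_inr
  · rw [fill, FreeMonoid.map_map, Sum.elim_comp_inl, FreeMonoid.map_id]
    exact hw

/-- `f` is an infinite word over the letters `Λ` and the variables `ℕ`, in which the variables
first occur in increasing order, the variable `n` at position `s n`. -/
def IsVariableWord (f : ℕ → Λ ⊕ ℕ) (s : ℕ → ℕ) : Prop :=
  ∀ n, f (s n) = .inr n ∧ ∀ j < s n, ∀ v, f j = .inr v → v < n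

theorem exists_limit_of_prefix {α : Type*} {p : ℕ → List α} (hp : ∀ n, p n <+: p (n + 1))
    (hlen : ∀ n, (p n).length < (p (n + 1)).length) :
    ∃ f : ℕ → α, ∀ n, (List.range (p n).length).map f = p n := by
  have prefix_of_le {m n : ℕ} (h : m ≤ n) : p m <+: p n := by
    induction n, h using Nat.le_induction with
    | base => exact List.prefix_rfl
    | succ n _ ih => exact ih.trans (hp n)
  have lt_length (j : ℕ) : j < (p (j + 1)).length := (strictMono_nat_of_lt_succ hlen).le_apply
  refine ⟨fun j => (p (j + 1))[j]'(lt_length j), fun n => List.ext_getElem (by simp) ?_⟩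
  intro j _ hj
  rw [List.getElem_map, List.getElem_range]
  rcases le_total (j + 1) n with h | h
  · exact (prefix_of_le h).getElem _
  · exact ((prefix_of_le h).getElem _).symm

theorem exists_isVariableWord_forall_mem [Finite Λ] (hvar : leftVariableWords Λ ∈ V)
    (hV : ∀ a b, V.map (subst a) * V.map (subst b) = V.map (subst a)) {a₀ : Λ}
    (hR : ∀ᶠ v in V, subst a₀ v ∈ R) :
    ∃ (f : ℕ → Λ ⊕ ℕ) (s : ℕ → ℕ), IsVariableWord f s ∧
      ∀ (n : ℕ) (a : ℕ → Λ), fill a (.ofList ((List.range (s n)).map f)) ∈ R := by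
  obtain ⟨v, hv⟩ := (eventually_extendable hV (w := 1) (by simpa only [one_mul] using hR)).exists
  obtain ⟨p₀, hp₀⟩ := exists_variableExtendable_zero hv
  choose! t ht using fun n (p : FreeMonoid (Λ ⊕ ℕ)) =>
    VariableExtendable.exists_succ (R := R) (n := n) (p := p) hvar hV
  let p : ℕ → FreeMonoid (Λ ⊕ ℕ) := fun n => n.rec p₀ fun n q => q * (of (.inr n) * t n q)
  have hp (n : ℕ) : VariableExtendable V R n (p n) := by
    induction n with
    | zero => exact hp₀
    | succ n ih => exact ht n (p n) ih
  obtain ⟨f, hf⟩ := exists_limit_of_prefix (p := fun n => (p n).toList)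
    (fun n => List.prefix_append _ _) (fun n => by simp [p])
  refine ⟨f, fun n => (p n).toList.length, fun n => ⟨?_, fun j hj v hv => ?_⟩, fun n a => ?_⟩
  · have h := congrArg (·[(p n).toList.length]?) (hf (n + 1))
    simpa [p] using h
  · refine (hp n).1 v ?_
    rw [← hv]
    have hmem := List.mem_map_of_mem (f := f) (List.mem_range.2 hj)
    rwa [hf n] at hmem
  · rw [hf n]
    exact ((hp n).2 a).1

/-- The **Carlson–Simpson theorem**, in the form of an infinite Hales–Jewett theorem: for every
set `R` of finite words there is an infinite variable word such that the instances of its initial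
segments ending just before a new variable are either all in `R` or all outside `R`. -/
theorem carlson_simpson [Finite Λ] [Nonempty Λ] (R : Set (List Λ)) :
    ∃ (f : ℕ → Λ ⊕ ℕ) (s : ℕ → ℕ), IsVariableWord f s ∧
      ((∀ (n : ℕ) (a : ℕ → Λ), ((List.range (s n)).map f).map (Sum.elim id a) ∈ R) ∨
        ∀ (n : ℕ) (a : ℕ → Λ), ((List.range (s n)).map f).map (Sum.elim id a) ∉ R) := by
  obtain ⟨V, hvar, hV⟩ := exists_absorbing_ultrafilter Λ
  rcases V.em (fun v => (subst (Classical.arbitrary Λ) v).toList ∈ R) with h | h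
  · obtain ⟨f, s, hf, hR⟩ := exists_isVariableWord_forall_mem hvar hV (R := R) h
    exact ⟨f, s, hf, .inl hR⟩
  · obtain ⟨f, s, hf, hR⟩ := exists_isVariableWord_forall_mem hvar hV (R := Rᶜ) h
    exact ⟨f, s, hf, .inr hR⟩

end CarlsonSimpson

/-! ### The rigid monoid and fusion -/

section RigidMonoid

variable {l : ℕ} {τ u u' g : ℕ → ℕ}

/-- `u` is a typed rigid surjection for the type function `τ`: the values `0, 1, 2, …` of `u` first
occur in this order, the value `k` at a point of type `k % l`, and a point of value `k` has type at
least `k % l`. These are the codes of the equivalence relations `ker u` in `𝓔^{P'}_∞`. -/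
structure TypedRigid (l : ℕ) (τ u : ℕ → ℕ) : Prop where
  exists_first : ∀ k, ∃ d, u d = k ∧ (∀ y < d, u y < k) ∧ τ d = k % l
  mod_le : ∀ x, u x % l ≤ τ x

namespace TypedRigid

/-- The first point at which the typed rigid surjection `u` takes the value `k`. -/
noncomputable def first (hu : TypedRigid l τ u) (k : ℕ) : ℕ := (hu.exists_first k).choose

theorem apply_first (hu : TypedRigid l τ u) (k : ℕ) : u (hu.first k) = k :=
  (hu.exists_first k).choose_spec.1

theorem apply_lt_of_lt_first (hu : TypedRigid l τ u) {k y : ℕ} (h : y < hu.first k) : u y < k :=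
  (hu.exists_first k).choose_spec.2.1 y h

theorem type_first (hu : TypedRigid l τ u) (k : ℕ) : τ (hu.first k) = k % l :=
  (hu.exists_first k).choose_spec.2.2

theorem first_le_of_le_apply (hu : TypedRigid l τ u) {k x : ℕ} (h : k ≤ u x) : hu.first k ≤ x :=
  not_lt.1 fun hlt => (hu.apply_lt_of_lt_first hlt).not_ge h

theorem first_strictMono (hu : TypedRigid l τ u) : StrictMono hu.first :=
  (Monotone.strictMono_of_injective fun j k hjk => hu.first_le_of_le_apply <| by
    rwa [hu.apply_first]) (Function.LeftInverse.injective hu.apply_first)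

theorem apply_le (hu : TypedRigid l τ u) (x : ℕ) : u x ≤ x :=
  hu.first_strictMono.le_apply.trans (hu.first_le_of_le_apply le_rfl)

theorem first_eq (hu : TypedRigid l τ u) {d k : ℕ} (hd : u d = k) (hlt : ∀ y < d, u y < k) :
    hu.first k = d :=
  (hu.first_le_of_le_apply hd.ge).eq_of_not_lt fun h =>
    (hlt _ h).ne (hu.apply_first k)

theorem comp (hg : TypedRigid l (· % l) g) (hu : TypedRigid l τ u) : TypedRigid l τ (g ∘ u) where
  exists_first k := by
    refine ⟨hu.first (hg.first k), ?_, fun y hy => ?_, ?_⟩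
    · rw [Function.comp_apply, hu.apply_first, hg.apply_first]
    · exact hg.apply_lt_of_lt_first (hu.apply_lt_of_lt_first hy)
    · rw [hu.type_first]
      exact hg.type_first k
  mod_le x := (hg.mod_le (u x)).trans (hu.mod_le x)

theorem exists_eq_comp (hu : TypedRigid l τ u) (hu' : TypedRigid l τ u')
    (h : ∀ x y, u x = u y → u' x = u' y) :
    TypedRigid l (· % l) (u' ∘ hu.first) ∧ u' = (u' ∘ hu.first) ∘ u := by
  have apply_first_apply (x : ℕ) : u' (hu.first (u x)) = u' x := h _ _ (hu.apply_first _)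
  refine ⟨⟨fun k => ⟨u (hu'.first k), ?_, fun y hy => ?_, ?_⟩, fun x => ?_⟩, ?_⟩
  · rw [Function.comp_apply, apply_first_apply, hu'.apply_first]
  · exact hu'.apply_lt_of_lt_first
      ((hu.first_strictMono hy).trans_le (hu.first_le_of_le_apply le_rfl))
  · have first_eq_first : hu.first (u (hu'.first k)) = hu'.first k :=
      (hu.first_le_of_le_apply le_rfl).antisymm <| hu'.first_le_of_le_apply <| by
        rw [apply_first_apply, hu'.apply_first]
    change u (hu'.first k) % l = k % l
    rw [← hu.type_first, first_eq_first, hu'.type_first]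
  · exact (hu'.mod_le _).trans_eq (hu.type_first x)
  · exact funext fun x => (apply_first_apply x).symm

theorem exists_first_eq_add_mul (hu : TypedRigid l (· % l) u) (k : ℕ) :
    ∃ n, hu.first k = k + l * n := by
  obtain ⟨d, hd⟩ := Nat.exists_eq_add_of_le (hu.first_strictMono.le_apply (x := k))
  have hmod : (k + d) % l = k % l := hd ▸ hu.type_first k
  obtain ⟨n, rfl⟩ : l ∣ d := by
    simpa only [Nat.add_sub_cancel_left] using
      (Nat.modEq_iff_dvd' (Nat.le_add_right _ d)).1 hmod.symm
  exact ⟨n, hd⟩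

end TypedRigid

/-- The monoid of typed rigid surjections of `ℕ`, the type of `x` being `x % l`. -/
def rigidMonoid (l : ℕ) : Submonoid (Function.End ℕ) where
  carrier := {g | TypedRigid l (· % l) g}
  one_mem' := ⟨fun k => ⟨k, rfl, fun _ hy => hy, rfl⟩, fun _ => le_rfl⟩
  mul_mem' hg hg' := hg.comp hg'

theorem typedRigid_smul (g : rigidMonoid l) : TypedRigid l (· % l) (g • ·) := g.2

/-- The members of the rigid monoid that fix `0, …, k`. -/
def rigidStabilizer (l k : ℕ) : Submonoid (rigidMonoid l) := fixingSubmonoid _ (Iic k)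

theorem mem_rigidStabilizer {k : ℕ} {g : rigidMonoid l} :
    g ∈ rigidStabilizer l k ↔ ∀ i ≤ k, g • i = i :=
  mem_fixingSubmonoid_iff _

theorem rigidStabilizer_antitone (l : ℕ) : Antitone (rigidStabilizer l) :=
  fun _ _ h => fixingSubmonoid_antitone _ _ (Iic_subset_Iic.2 h)

theorem mem_rigidStabilizer_zero (g : rigidMonoid l) : g ∈ rigidStabilizer l 0 :=
  mem_rigidStabilizer.2 fun i hi => by
    rw [Nat.le_zero.1 hi]
    exact Nat.le_zero.1 ((typedRigid_smul g).apply_le 0)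

/-- `σ` is a stem of length `d`: it only collapses points below `d`, to values below `σ • d`, and is
a shift from `d` onwards. -/
def IsStem (d : ℕ) (σ : rigidMonoid l) : Prop :=
  (∀ i < d, σ • i < σ • d) ∧ ∀ i, σ • (d + i) = σ • d + i

namespace IsStem

variable {d : ℕ} {σ h g : rigidMonoid l}

theorem first_eq (hσ : IsStem d σ) : (typedRigid_smul σ).first (σ • d) = d :=
  TypedRigid.first_eq _ rfl hσ.1

theorem exists_eq_mul (hσ : IsStem d σ) (hlt : ∀ i < d, h • i = σ • i) (hd : h • d = σ • d) :
    ∃ h' ∈ rigidStabilizer l (σ • d), h = h' * σ := by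
  have collapse (x y : ℕ) (hxy : σ • x = σ • y) : h • x = h • y := by
    wlog hle : x ≤ y generalizing x y
    · exact (this y x hxy.symm (le_of_not_ge hle)).symm
    rcases lt_or_ge y d with hy | hy
    · rw [hlt x (hle.trans_lt hy), hlt y hy, hxy]
    · obtain ⟨j, rfl⟩ := Nat.exists_eq_add_of_le hy
      rcases lt_or_ge x d with hx | hx
      · have := hσ.1 x hx
        rw [hxy, hσ.2] at this
        omega
      · obtain ⟨i, rfl⟩ := Nat.exists_eq_add_of_le hx
        rw [hσ.2, hσ.2, add_right_inj] at hxy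
        rw [hxy]
  obtain ⟨hr, heq⟩ := (typedRigid_smul σ).exists_eq_comp (typedRigid_smul h) collapse
  refine ⟨⟨_, hr⟩, mem_rigidStabilizer.2 fun i hi => ?_, Subtype.ext heq⟩
  change h • (typedRigid_smul σ).first i = i
  rcases hi.lt_or_eq with hi | rfl
  · have := (typedRigid_smul σ).first_strictMono hi
    rw [hσ.first_eq] at this
    rw [hlt _ this]
    exact (typedRigid_smul σ).apply_first i
  · rw [hσ.first_eq, hd]

theorem exists_mul_eq_mul (hσ : IsStem d σ) (hg : g ∈ rigidStabilizer l d) :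
    ∃ g' ∈ rigidStabilizer l (σ • d), σ * g = g' * σ := by
  have hg := mem_rigidStabilizer.1 hg
  exact hσ.exists_eq_mul (fun i hi => by rw [mul_smul, hg i hi.le])
    (by rw [mul_smul, hg d le_rfl])

/-- The lift of `g` along the stem `σ`: the identity below `d`, and beyond `d` a section of `σ`
applied to `g • σ • ·`. -/
noncomputable def lift (d : ℕ) (σ g : rigidMonoid l) (i : ℕ) : ℕ :=
  if i < d then i else (typedRigid_smul σ).first (g • σ • i)

theorem first_apply (hσ : IsStem d σ) {j : ℕ} (hj : d ≤ j) :
    (typedRigid_smul σ).first (σ • j) = j := by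
  obtain ⟨i, rfl⟩ := Nat.exists_eq_add_of_le hj
  refine TypedRigid.first_eq _ rfl fun y hy => ?_
  rcases lt_or_ge y d with hyd | hyd
  · exact (hσ.1 y hyd).trans_le (by rw [hσ.2]; exact Nat.le_add_right _ _)
  · obtain ⟨y, rfl⟩ := Nat.exists_eq_add_of_le hyd
    rw [hσ.2, hσ.2]
    omega

theorem typedRigid_lift (hσ : IsStem d σ) (g : rigidMonoid l) :
    TypedRigid l (· % l) (lift d σ g) := by
  have hσt := typedRigid_smul σ
  have hgt := typedRigid_smul g
  refine ⟨fun j => ?_, fun i => ?_⟩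
  · rcases lt_or_ge j d with hj | hj
    · exact ⟨j, if_pos hj, fun y hy => (if_pos (hy.trans hj)).trans_lt hy, rfl⟩
    have le_first : d ≤ hσt.first (hgt.first (σ • j)) := by
      refine hj.trans ((hσ.first_apply hj).ge.trans ?_)
      exact hσt.first_strictMono.monotone hgt.first_strictMono.le_apply
    refine ⟨hσt.first (hgt.first (σ • j)), ?_, fun y hy => ?_, ?_⟩
    · rw [lift, if_neg le_first.not_gt, hσt.apply_first, hgt.apply_first, hσ.first_apply hj]
    · rw [lift]
      split_ifs with hyd
      · exact hyd.trans_le hj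
      · rw [← hσ.first_apply hj]
        exact hσt.first_strictMono (hgt.apply_lt_of_lt_first (hσt.apply_lt_of_lt_first hy))
    · rw [hσt.type_first]
      refine (hgt.type_first _).trans ?_
      rw [← hσt.type_first, hσ.first_apply hj]
  · unfold lift
    split_ifs
    · exact le_rfl
    · exact (hσt.type_first _).trans_le ((hgt.mod_le _).trans (hσt.mod_le i))

theorem exists_mul_eq_mul_of_mem (hσ : IsStem d σ) (hg : g ∈ rigidStabilizer l (σ • d)) :
    ∃ g' ∈ rigidStabilizer l d, σ * g' = g * σ := by
  have hg := mem_rigidStabilizer.1 hg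
  refine ⟨⟨lift d σ g, hσ.typedRigid_lift g⟩, mem_rigidStabilizer.2 fun i hi => ?_,
    Subtype.ext (funext fun i => ?_)⟩
  · change lift d σ g i = i
    rcases hi.lt_or_eq with hi | rfl
    · exact if_pos hi
    · rw [lift, if_neg (lt_irrefl _), hg _ le_rfl, hσ.first_eq]
  · change σ • lift d σ g i = g • σ • i
    rw [lift]
    split_ifs with hi
    · rw [hg _ (hσ.1 i hi).le]
    · exact (typedRigid_smul σ).apply_first _

theorem finite_setOf (l d : ℕ) : {σ : rigidMonoid l | IsStem d σ}.Finite := by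
  refine Set.Finite.of_injOn (f := fun σ (i : Fin (d + 1)) => σ • (i : ℕ))
    (t := univ.pi fun _ => Iic d)
    (fun σ _ i _ => ((typedRigid_smul σ).apply_le i).trans (Nat.lt_succ_iff.1 i.2))
    (fun σ hσ σ' hσ' h => ?_) (Finite.pi fun _ => finite_Iic d)
  have agree (i : ℕ) (hi : i ≤ d) : σ • i = σ' • i := congrFun h ⟨i, Nat.lt_succ_iff.2 hi⟩
  refine Subtype.ext (funext fun i => ?_)
  change σ • i = σ' • i
  rcases le_total i d with hi | hi
  · exact agree i hi
  · obtain ⟨i, rfl⟩ := Nat.exists_eq_add_of_le hi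
    rw [hσ.2, hσ'.2, agree d le_rfl]

end IsStem

/-- Agrees with `u` before the first value `k`, and is a shift from there onwards. -/
noncomputable def TypedRigid.truncate (hu : TypedRigid l τ u) (k i : ℕ) : ℕ :=
  if i < hu.first k then u i else k + (i - hu.first k)

theorem TypedRigid.truncate_add (hu : TypedRigid l τ u) (k i : ℕ) :
    hu.truncate k (hu.first k + i) = k + i := by
  simp [truncate]

theorem TypedRigid.typedRigid_truncate (hu : TypedRigid l (· % l) u) (k : ℕ) :
    TypedRigid l (· % l) (hu.truncate k) := by
  have truncate_of_lt {i : ℕ} (hi : i < hu.first k) : hu.truncate k i = u i := if_pos hi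
  have type_add (i : ℕ) : (hu.first k + i) % l = (k + i) % l :=
    Nat.ModEq.add_right i (hu.type_first k)
  refine ⟨fun j => ?_, fun i => ?_⟩
  · rcases lt_or_ge j k with hj | hj
    · have hlt := hu.first_strictMono hj
      refine ⟨hu.first j, ?_, fun y hy => ?_, hu.type_first j⟩
      · rw [truncate_of_lt hlt, hu.apply_first]
      · rw [truncate_of_lt (hy.trans hlt)]
        exact hu.apply_lt_of_lt_first hy
    · obtain ⟨j, rfl⟩ := Nat.exists_eq_add_of_le hj
      refine ⟨hu.first k + j, hu.truncate_add k j, fun y hy => ?_, type_add j⟩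
      rcases lt_or_ge y (hu.first k) with hyd | hyd
      · rw [truncate_of_lt hyd]
        exact (hu.apply_lt_of_lt_first hyd).trans_le hj
      · obtain ⟨y, rfl⟩ := Nat.exists_eq_add_of_le hyd
        rw [hu.truncate_add]
        omega
  · rcases lt_or_ge i (hu.first k) with hi | hi
    · rw [truncate_of_lt hi]
      exact hu.mod_le i
    · obtain ⟨i, rfl⟩ := Nat.exists_eq_add_of_le hi
      rw [hu.truncate_add]
      exact (type_add i).ge

theorem exists_isStem_eq_mul (h : rigidMonoid l) (k : ℕ) :
    ∃ d ≥ k, ∃ σ : rigidMonoid l,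
      IsStem d σ ∧ σ • d = k ∧ ∃ h' ∈ rigidStabilizer l k, h = h' * σ := by
  have ht := typedRigid_smul h
  let σ : rigidMonoid l := ⟨ht.truncate k, ht.typedRigid_truncate k⟩
  have smul_of_lt {i : ℕ} (hi : i < ht.first k) : σ • i = h • i := if_pos hi
  have smul_add (i : ℕ) : σ • (ht.first k + i) = k + i := ht.truncate_add k i
  have smul_first : σ • ht.first k = k := smul_add 0
  have hσ : IsStem (ht.first k) σ :=
    ⟨fun i hi => by rw [smul_of_lt hi, smul_first]; exact ht.apply_lt_of_lt_first hi,
      fun i => by rw [smul_add, smul_first]⟩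
  obtain ⟨h', hh', heq⟩ := hσ.exists_eq_mul (h := h) (fun i hi => (smul_of_lt hi).symm)
    ((ht.apply_first k).trans smul_first.symm)
  rw [smul_first] at hh'
  exact ⟨ht.first k, ht.first_strictMono.le_apply, σ, hσ, smul_first, h', hh', heq⟩

section ForallStem

theorem IsStem.leftHereditary {d : ℕ} {σ : rigidMonoid l} (hσ : IsStem d σ)
    {D : rigidMonoid l → Prop} (hD : LeftHereditary (rigidStabilizer l (σ • d)) D) :
    LeftHereditary (rigidStabilizer l d) (fun A => D (σ * A)) := by
  intro A hA g hg
  obtain ⟨g', hg', heq⟩ := hσ.exists_mul_eq_mul hg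
  rw [← mul_assoc, heq, mul_assoc]
  exact hD _ hA g' hg'

theorem IsStem.leftCofinal {d : ℕ} {σ : rigidMonoid l} (hσ : IsStem d σ)
    {D : rigidMonoid l → Prop} (hD : LeftCofinal (rigidStabilizer l (σ • d)) D) :
    LeftCofinal (rigidStabilizer l d) (fun A => D (σ * A)) := by
  intro A
  obtain ⟨g, hg, hA⟩ := hD (σ * A)
  obtain ⟨g', hg', heq⟩ := hσ.exists_mul_eq_mul_of_mem hg
  refine ⟨g', hg', ?_⟩
  change D (σ * (g' * A))
  rwa [← mul_assoc, heq, mul_assoc]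

variable {D : ℕ → rigidMonoid l → Prop}

/-- Quantifying `D` over the finitely many stems of length `d` turns cofinality of `D (σ • d)` for
`rigidStabilizer l (σ • d)` into cofinality of one property for `rigidStabilizer l d`. -/
def ForallStem (D : ℕ → rigidMonoid l → Prop) (d : ℕ) (A : rigidMonoid l) : Prop :=
  ∀ σ : rigidMonoid l, IsStem d σ → D (σ • d) (σ * A)

theorem leftHereditary_forallStem (hD : ∀ k, LeftHereditary (rigidStabilizer l k) (D k)) (d : ℕ) :
    LeftHereditary (rigidStabilizer l d) (ForallStem D d) :=
  fun A hA g hg σ hσ => hσ.leftHereditary (hD _) A (hA σ hσ) g hg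

theorem leftCofinal_forallStem (hH : ∀ k, LeftHereditary (rigidStabilizer l k) (D k))
    (hD : ∀ k, LeftCofinal (rigidStabilizer l k) (D k)) (d : ℕ) :
    LeftCofinal (rigidStabilizer l d) (ForallStem D d) := by
  have := (IsStem.finite_setOf l d).to_subtype
  exact (LeftCofinal.forall_finite (ι := {σ : rigidMonoid l | IsStem d σ})
    (fun σ => σ.2.leftHereditary (hH _)) (fun σ => σ.2.leftCofinal (hD _))).mono
    fun A hA σ hσ => hA ⟨σ, hσ⟩

end ForallStem

section InfiniteProduct

/-- `g (n + m - 1) * ⋯ * g (n + 1) * g n`. -/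
def backProd (g : ℕ → rigidMonoid l) (n : ℕ) : ℕ → rigidMonoid l
  | 0 => 1
  | m + 1 => g (n + m) * backProd g n m

theorem backProd_succ' (g : ℕ → rigidMonoid l) (n m : ℕ) :
    backProd g n (m + 1) = backProd g (n + 1) m * g n := by
  induction m with
  | zero => simp [backProd]
  | succ m ih => rw [backProd, ih, backProd, mul_assoc, Nat.add_right_comm n 1 m, add_assoc]

variable {k : ℕ} {g : ℕ → rigidMonoid l}

theorem backProd_smul_of_le (hg : ∀ n, g n ∈ rigidStabilizer l (k + n)) {n m m' x : ℕ}
    (hx : backProd g n m • x ≤ k + n + m) (hm : m ≤ m') :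
    backProd g n m' • x = backProd g n m • x := by
  induction m', hm using Nat.le_induction with
  | base => rfl
  | succ m' hm ih =>
    rw [backProd, mul_smul, ih]
    exact mem_rigidStabilizer.1 (hg _) _ (by omega)

theorem backProd_smul_le (g : ℕ → rigidMonoid l) (n m x : ℕ) : backProd g n m • x ≤ x :=
  (typedRigid_smul _).apply_le x

/-- The infinite product `⋯ * g (n + 1) * g n`, which makes sense pointwise because almost all
`g m` fix any given point. -/
def infProdFun (g : ℕ → rigidMonoid l) (n x : ℕ) : ℕ := backProd g n x • x

theorem infProdFun_eq (hg : ∀ n, g n ∈ rigidStabilizer l (k + n)) {n m x : ℕ}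
    (hx : backProd g n m • x ≤ k + n + m) : infProdFun g n x = backProd g n m • x := by
  rcases le_total m x with hm | hm
  · exact backProd_smul_of_le hg hx hm
  · exact (backProd_smul_of_le hg ((backProd_smul_le g n x x).trans (by omega)) hm).symm

theorem typedRigid_infProdFun (hg : ∀ n, g n ∈ rigidStabilizer l (k + n)) (n : ℕ) :
    TypedRigid l (· % l) (infProdFun g n) := by
  refine ⟨fun j => ?_, fun x => (typedRigid_smul (backProd g n x)).mod_le x⟩
  have ht := typedRigid_smul (backProd g n j)
  have stable {x : ℕ} (hx : backProd g n j • x ≤ j) :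
      infProdFun g n x = backProd g n j • x := infProdFun_eq hg (by omega)
  refine ⟨ht.first j, ?_, fun y hy => ?_, ht.type_first j⟩
  · rw [stable (ht.apply_first j).le]
    exact ht.apply_first j
  · have hlt : backProd g n j • y < j := ht.apply_lt_of_lt_first hy
    rwa [stable hlt.le]

theorem exists_infinite_product (hg : ∀ n, g n ∈ rigidStabilizer l (k + n)) :
    ∃ t : ℕ → rigidMonoid l, ∀ n, t n ∈ rigidStabilizer l (k + n) ∧ t n = t (n + 1) * g n := by
  refine ⟨fun n => ⟨infProdFun g n, typedRigid_infProdFun hg n⟩, fun n =>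
    ⟨mem_rigidStabilizer.2 fun i hi => ?_, Subtype.ext (funext fun x => ?_)⟩⟩
  · exact infProdFun_eq hg (m := 0) (by rw [backProd, one_smul]; omega)
  · change infProdFun g n x = infProdFun g (n + 1) (g n • x)
    have hle : g n • x ≤ x := (typedRigid_smul (g n)).apply_le x
    rw [infProdFun_eq hg (m := x + 1) ((backProd_smul_le g n _ x).trans (by omega)),
      infProdFun_eq hg (m := x) ((backProd_smul_le g _ _ _).trans (by omega)),
      backProd_succ', mul_smul]

end InfiniteProduct

theorem hasFusion_rigidStabilizer (l : ℕ) : HasFusion (rigidStabilizer l) := by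
  intro D hH hD k A
  choose G hG hGD using leftCofinal_forallStem hH hD
  let B : ℕ → rigidMonoid l := fun n => n.rec A fun m C => G (k + m) C * C
  obtain ⟨t, ht⟩ := exists_infinite_product (g := fun n => G (k + n) (B n)) fun n => hG _ _
  have product_eq (n : ℕ) : t 0 * A = t n * B n := by
    induction n with
    | zero => rfl
    | succ n ih => rw [ih, (ht n).2, mul_assoc]
  have forallStem (n : ℕ) : ForallStem D (k + n) (t 0 * A) := by
    rw [product_eq (n + 1)]
    exact leftHereditary_forallStem hH _ _ (hGD (k + n) (B n)) _
      (rigidStabilizer_antitone l (Nat.le_succ _) (ht (n + 1)).1)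
  refine ⟨t 0, (ht 0).1, fun k' hk' h _ => ?_⟩
  obtain ⟨d, hd, σ, hσ, rfl, h', hh', rfl⟩ := exists_isStem_eq_mul h k'
  obtain ⟨n, rfl⟩ := Nat.exists_eq_add_of_le (hk'.trans hd)
  rw [mul_assoc]
  exact hH _ _ (forallStem n σ hσ) h' hh'

end RigidMonoid

/-! ### The pigeonhole principle -/

section Pigeonhole

variable {l : ℕ} {k : ℕ} {Λ : Type*}

theorem IsVariableWord.eq_inr {f : ℕ → Λ ⊕ ℕ} {s : ℕ → ℕ} (hf : IsVariableWord f s) (n : ℕ) :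
    f (s n) = .inr n :=
  (hf n).1

theorem IsVariableWord.lt_of_lt {f : ℕ → Λ ⊕ ℕ} {s : ℕ → ℕ} (hf : IsVariableWord f s) {n j v : ℕ}
    (hj : j < s n) (hv : f j = .inr v) : v < n :=
  (hf n).2 j hj v hv

/-- The variable word consisting of the letters of `w` followed by `0, 1, 2, …`. -/
def appendVariables (w : List Λ) (j : ℕ) : Λ ⊕ ℕ :=
  if hj : j < w.length then .inl w[j] else .inr (j - w.length)

theorem appendVariables_of_lt (w : List Λ) {j : ℕ} (hj : j < w.length) :
    appendVariables w j = .inl w[j] :=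
  dif_pos hj

theorem appendVariables_length_add (w : List Λ) (j : ℕ) :
    appendVariables w (w.length + j) = .inr j := by
  simp [appendVariables]

theorem isVariableWord_appendVariables (w : List Λ) :
    IsVariableWord (appendVariables w) (w.length + ·) := by
  refine fun n => ⟨appendVariables_length_add w n, fun j hj v hv => ?_⟩
  rcases lt_or_ge j w.length with h | h
  · rw [appendVariables_of_lt w h] at hv
    cases hv
  · obtain ⟨j, rfl⟩ := Nat.exists_eq_add_of_le h
    rw [appendVariables_length_add] at hv
    cases hv
    exact Nat.lt_of_add_lt_add_left hj

/-- A way of mapping a block of `l` consecutive points, the first of them congruent to `k + 1`, to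
`0, …, k` so that the points have at least the type of their values. -/
abbrev BlockLetter (l k : ℕ) : Type :=
  {a : Fin l → Fin (k + 1) // ∀ r : Fin l, (a r : ℕ) % l ≤ (k + 1 + r) % l}

instance (l k : ℕ) : Nonempty (BlockLetter l k) :=
  ⟨⟨fun _ => 0, fun _ => by simp⟩⟩

theorem block_lt_block_iff {i j : ℕ} {r r' : Fin l} :
    l * i + r < l * j + r' ↔ i < j ∨ i = j ∧ r < r' := by
  have block_lt {i j : ℕ} (hij : i < j) (r r' : Fin l) : l * i + r < l * j + r' := by
    have : l * (i + 1) ≤ l * j := Nat.mul_le_mul_left l hij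
    rw [mul_add_one] at this
    omega
  rcases lt_trichotomy i j with h | rfl | h
  · simp [h, block_lt h]
  · simp
  · simp [h.not_gt, h.ne', (block_lt h r' r).le]

theorem mod_block (k j : ℕ) (r : Fin l) : (k + 1 + (l * j + r)) % l = (k + 1 + r) % l := by
  rw [add_left_comm, Nat.mul_add_mod]

variable [NeZero l] {f : ℕ → BlockLetter l k ⊕ ℕ} {s : ℕ → ℕ}

theorem exists_eq_block_add (l : ℕ) [NeZero l] (n : ℕ) : ∃ (j : ℕ) (r : Fin l), n = l * j + r :=
  ⟨n / l, Fin.ofNat l n, (Nat.div_add_mod n l).symm⟩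

/-- Fixes `0, …, k` and maps the `j`-th block of length `l` thereafter according to the letter
`f j`, or onto the `v`-th block if `f j` is the variable `v`. -/
def blockFun (f : ℕ → BlockLetter l k ⊕ ℕ) (x : ℕ) : ℕ :=
  if x ≤ k then x else
    (f ((x - (k + 1)) / l)).elim (fun a => a.1 (Fin.ofNat l (x - (k + 1))))
      (fun v => k + 1 + (l * v + (x - (k + 1)) % l))

theorem blockFun_of_le {x : ℕ} (hx : x ≤ k) : blockFun f x = x := if_pos hx

theorem blockFun_block (f : ℕ → BlockLetter l k ⊕ ℕ) (j : ℕ) (r : Fin l) :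
    blockFun f (k + 1 + (l * j + r)) =
      (f j).elim (fun a => (a.1 r : ℕ)) (fun v => k + 1 + (l * v + r)) := by
  have hlt : ¬ k + 1 + (l * j + r) ≤ k := by omega
  have hdiv : (l * j + r) / l = j := by
    rw [Nat.mul_add_div (NeZero.pos l), Nat.div_eq_of_lt r.2, add_zero]
  have hmod : (l * j + r) % l = r := by rw [Nat.mul_add_mod, Nat.mod_eq_of_lt r.2]
  have hofNat : Fin.ofNat l (l * j + r) = r := Fin.ext hmod
  rw [blockFun, if_neg hlt, Nat.add_sub_cancel_left, hdiv, hmod, hofNat]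

theorem blockFun_letter {j : ℕ} {a : BlockLetter l k} (hj : f j = .inl a) (r : Fin l) :
    blockFun f (k + 1 + (l * j + r)) = a.1 r := by
  rw [blockFun_block, hj, Sum.elim_inl]

theorem blockFun_variable {j v : ℕ} (hj : f j = .inr v) (r : Fin l) :
    blockFun f (k + 1 + (l * j + r)) = k + 1 + (l * v + r) := by
  rw [blockFun_block, hj, Sum.elim_inr]

theorem typedRigid_blockFun (hf : IsVariableWord f s) : TypedRigid l (· % l) (blockFun f) := by
  refine ⟨fun n => ?_, fun x => ?_⟩
  · rcases le_or_gt n k with hn | hn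
    · exact ⟨n, blockFun_of_le hn, fun y hy => by rwa [blockFun_of_le (hy.le.trans hn)], rfl⟩
    obtain ⟨n, rfl⟩ := Nat.exists_eq_add_of_le hn
    obtain ⟨v, r, rfl⟩ := exists_eq_block_add l n
    refine ⟨k + 1 + (l * s v + r), blockFun_variable (hf.eq_inr v) r, fun y hy => ?_, ?_⟩
    · rcases le_or_gt y k with hyk | hyk
      · rw [blockFun_of_le hyk]
        omega
      obtain ⟨y, rfl⟩ := Nat.exists_eq_add_of_le hyk
      obtain ⟨j, r', rfl⟩ := exists_eq_block_add l y
      rcases hj : f j with a | w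
      · rw [blockFun_letter hj]
        omega
      · rw [blockFun_variable hj]
        refine Nat.add_lt_add_left (block_lt_block_iff.2 ?_) _
        rcases block_lt_block_iff.1 (Nat.lt_of_add_lt_add_left hy) with hlt | ⟨rfl, hlt⟩
        · exact .inl (hf.lt_of_lt hlt hj)
        · exact .inr ⟨Sum.inr_injective (hj.symm.trans (hf.eq_inr v)), hlt⟩
    · exact (mod_block k _ r).trans (mod_block k _ r).symm
  · rcases le_or_gt x k with hx | hx
    · rw [blockFun_of_le hx]
    obtain ⟨x, rfl⟩ := Nat.exists_eq_add_of_le hx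
    obtain ⟨j, r, rfl⟩ := exists_eq_block_add l x
    rcases hj : f j with a | v
    · rw [blockFun_letter hj]
      exact (a.2 r).trans_eq (mod_block k j r).symm
    · rw [blockFun_variable hj]
      exact ((mod_block k v r).trans (mod_block k j r).symm).le

/-- The member of the rigid monoid given by `blockFun f`. -/
def blockMap (hf : IsVariableWord f s) : rigidMonoid l := ⟨blockFun f, typedRigid_blockFun hf⟩

theorem blockMap_mem_rigidStabilizer (hf : IsVariableWord f s) :
    blockMap hf ∈ rigidStabilizer l k :=
  mem_rigidStabilizer.2 fun _ hi => blockFun_of_le hi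

/-- The member of the rigid monoid that collapses the first `w.length` blocks after `k` according
to the letters of `w` and is a shift from there onwards. -/
def wordMap (w : List (BlockLetter l k)) : rigidMonoid l :=
  blockMap (isVariableWord_appendVariables w)

theorem wordMap_block (w : List (BlockLetter l k)) {j : ℕ} (hj : j < w.length) (r : Fin l) :
    wordMap w • (k + 1 + (l * j + r)) = (w[j].1 r : ℕ) :=
  blockFun_letter (appendVariables_of_lt w hj) r

theorem wordMap_length_add (w : List (BlockLetter l k)) (i : ℕ) :
    wordMap w • (k + 1 + l * w.length + i) = k + 1 + i := by
  obtain ⟨j, r, rfl⟩ := exists_eq_block_add l i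
  have h := blockFun_variable (appendVariables_length_add w j) r
  rwa [mul_add, add_assoc (l * w.length), ← add_assoc (k + 1) (l * w.length)] at h

theorem wordMap_length (w : List (BlockLetter l k)) :
    wordMap w • (k + 1 + l * w.length) = k + 1 :=
  wordMap_length_add w 0

theorem isStem_wordMap (w : List (BlockLetter l k)) :
    IsStem (k + 1 + l * w.length) (wordMap w) := by
  refine ⟨fun i hi => ?_, fun i => by rw [wordMap_length_add, wordMap_length]⟩
  rw [wordMap_length]
  rcases le_or_gt i k with hik | hik
  · exact (blockFun_of_le hik).trans_lt (Nat.lt_succ_of_le hik)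
  obtain ⟨i, rfl⟩ := Nat.exists_eq_add_of_le hik
  obtain ⟨j, r, rfl⟩ := exists_eq_block_add l i
  have hj : j < w.length :=
    Nat.lt_of_mul_lt_mul_left (a := l) (by omega)
  rw [wordMap_block w hj]
  exact (w[j].1 r).2

theorem exists_blockLetters {h : rigidMonoid l} {n : ℕ}
    (hn : (typedRigid_smul h).first (k + 1) = k + 1 + l * n) :
    ∃ a : ℕ → BlockLetter l k, ∀ v < n, ∀ r : Fin l,
      ((a v).1 r : ℕ) = h • (k + 1 + (l * v + r)) := by
  have ht := typedRigid_smul h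
  have exists_letter : ∀ v < n, ∃ a : BlockLetter l k,
      ∀ r : Fin l, (a.1 r : ℕ) = h • (k + 1 + (l * v + r)) := fun v hv =>
    ⟨⟨fun r => ⟨h • (k + 1 + (l * v + r)), ht.apply_lt_of_lt_first <| by
        rw [hn]
        exact Nat.add_lt_add_left (block_lt_block_iff (r' := 0).2 (.inl hv)) _⟩,
      fun r => (ht.mod_le _).trans_eq (mod_block k v r)⟩, fun r => rfl⟩
  choose! a ha using exists_letter
  exact ⟨a, ha⟩

theorem exists_mul_blockMap_eq_mul_wordMap (hf : IsVariableWord f s) {h : rigidMonoid l}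
    (hh : h ∈ rigidStabilizer l k) :
    ∃ (n : ℕ) (a : ℕ → BlockLetter l k), ∃ h' ∈ rigidStabilizer l (k + 1),
      h * blockMap hf = h' * wordMap (((List.range (s n)).map f).map (Sum.elim id a)) := by
  obtain ⟨n, hn⟩ := (typedRigid_smul h).exists_first_eq_add_mul (k + 1)
  obtain ⟨a, ha⟩ := exists_blockLetters hn
  let w := ((List.range (s n)).map f).map (Sum.elim id a)
  have length_w : w.length = s n := by simp [w]
  have getElem_w {j : ℕ} (hj : j < w.length) : w[j] = (f j).elim id a := by simp [w]
  have h_fix := mem_rigidStabilizer.1 hh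
  have agree_below : ∀ i < k + 1 + l * w.length, (h * blockMap hf) • i = wordMap w • i := by
    intro i hi
    rw [mul_smul]
    rcases le_or_gt i k with hik | hik
    · exact (congrArg (h • ·) (blockFun_of_le hik)).trans
        ((h_fix i hik).trans (blockFun_of_le hik).symm)
    obtain ⟨i, rfl⟩ := Nat.exists_eq_add_of_le hik
    obtain ⟨j, r, rfl⟩ := exists_eq_block_add l i
    have hj : j < w.length := Nat.lt_of_mul_lt_mul_left (a := l) (by omega)
    rw [wordMap_block w hj, getElem_w hj]
    rcases hfj : f j with b | v
    · exact (congrArg (h • ·) (blockFun_letter hfj r)).trans (h_fix _ (Nat.le_of_lt_succ (b.1 r).2))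
    · exact (congrArg (h • ·) (blockFun_variable hfj r)).trans
        (ha v (hf.lt_of_lt (length_w ▸ hj) hfj) r).symm
  have agree_at : (h * blockMap hf) • (k + 1 + l * w.length) = k + 1 := by
    rw [mul_smul, length_w]
    refine (congrArg (h • ·) (blockFun_variable (hf.eq_inr n) 0)).trans ?_
    rw [Fin.val_zero, add_zero, ← hn]
    exact (typedRigid_smul h).apply_first (k + 1)
  obtain ⟨h', hh', heq⟩ := (isStem_wordMap w).exists_eq_mul agree_below
    (agree_at.trans (wordMap_length w).symm)
  rw [wordMap_length] at hh'
  exact ⟨n, a, h', hh', heq⟩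

theorem hasPigeonhole_rigidStabilizer (l : ℕ) [NeZero l] : HasPigeonhole (rigidStabilizer l) := by
  intro k χ hχ
  obtain ⟨f, s, hf, hR⟩ := carlson_simpson {w : List (BlockLetter l k) | wordMap w ∈ χ}
  have mem_iff {h : rigidMonoid l} (hh : h ∈ rigidStabilizer l k) :
      ∃ (n : ℕ) (a : ℕ → BlockLetter l k), h * blockMap hf ∈ χ ↔
        ((List.range (s n)).map f).map (Sum.elim id a) ∈ {w | wordMap w ∈ χ} := by
    obtain ⟨n, a, h', hh', heq⟩ := exists_mul_blockMap_eq_mul_wordMap hf hh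
    exact ⟨n, a, heq ▸ hχ _ (blockMap_mem_rigidStabilizer _) h' hh'⟩
  refine ⟨blockMap hf, blockMap_mem_rigidStabilizer hf, hR.imp (fun hR h hh => ?_)
    (fun hR h hh => ?_)⟩
  · obtain ⟨n, a, hiff⟩ := mem_iff hh
    exact hiff.2 (hR n a)
  · obtain ⟨n, a, hiff⟩ := mem_iff hh
    exact fun hmem => hR n a (hiff.1 hmem)

theorem isRamseySequence_rigidStabilizer (l : ℕ) [NeZero l] :
    IsRamseySequence (rigidStabilizer l) :=
  ⟨rigidStabilizer_antitone l, hasFusion_rigidStabilizer l, hasPigeonhole_rigidStabilizer l⟩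

end Pigeonhole

/-! ### Coding equivalence relations by the rigid monoid -/

section TypedRigidKer

variable {l : ℕ} {τ u : ℕ → ℕ}

theorem pRep_eq_of_minReps_eq_range {E : Setoid ℕ} {f : ℕ → ℕ} (hf : StrictMono f)
    (hE : minReps E = range f) : pRep E = f := by
  have hinf : {x | x ∈ minReps E}.Infinite := hE ▸ infinite_range_of_injective hf.injective
  exact ((Nat.nth_strictMono hinf).range_inj hf).1 ((Nat.range_nth_of_infinite hinf).trans hE)

theorem TypedRigid.minReps_ker (hu : TypedRigid l τ u) :
    minReps (Setoid.ker u) = range hu.first := by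
  ext x
  refine ⟨fun hx => ⟨u x, ?_⟩, ?_⟩
  · exact (hu.first_le_of_le_apply le_rfl).antisymm (hx _ (hu.apply_first _).symm)
  · rintro ⟨k, rfl⟩ m hm
    exact hu.first_le_of_le_apply ((hu.apply_first k).symm.trans hm).le

theorem TypedRigid.pRep_ker (hu : TypedRigid l τ u) : pRep (Setoid.ker u) = hu.first :=
  pRep_eq_of_minReps_eq_range hu.first_strictMono hu.minReps_ker

theorem TypedRigid.infinite_classes_ker (hu : TypedRigid l τ u) :
    (classes (Setoid.ker u)).Infinite := by
  refine infinite_of_injective_forall_mem (f := fun k => {y | u (hu.first k) = u y})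
    (fun j k hjk => ?_) (fun k => ⟨hu.first k, rfl⟩)
  have same_value : u (hu.first k) = u (hu.first j) := (Set.ext_iff.1 hjk (hu.first j)).1 rfl
  rwa [hu.apply_first, hu.apply_first, eq_comm] at same_value

theorem TypedRigid.approx_ker_comp {g : ℕ → ℕ} (hg : TypedRigid l (· % l) g)
    (hu : TypedRigid l τ u) {n : ℕ} (hfix : ∀ i ≤ n, g i = i) :
    approx n (Setoid.ker (g ∘ u)) = approx n (Setoid.ker u) := by
  have fixes {x : ℕ} (hx : x < hu.first n) : g (u x) = u x :=
    hfix _ (hu.apply_lt_of_lt_first hx).le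
  have first_eq : (hg.comp hu).first n = hu.first n := by
    refine first_eq _ ?_ fun y hy => ?_
    · rw [Function.comp_apply, hu.apply_first, hfix n le_rfl]
    · rw [Function.comp_apply, fixes hy]
      exact hu.apply_lt_of_lt_first hy
  ext ⟨x, y⟩
  simp only [approx, (hg.comp hu).pRep_ker, hu.pRep_ker, first_eq, mem_ofPred_eq]
  refine and_congr_right fun hx => and_congr_right fun hy => ?_
  change g (u x) = g (u y) ↔ u x = u y
  rw [fixes hx, fixes hy]

theorem coarsens_ker_comp (g u : ℕ → ℕ) : Coarsens (Setoid.ker (g ∘ u)) (Setoid.ker u) :=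
  fun _ _ h => congrArg g h

theorem Coarsens.trans {X : Type*} {E F G : Setoid X} (hEF : Coarsens E F) (hFG : Coarsens F G) :
    Coarsens E G :=
  fun a b h => hEF a b (hFG a b h)

theorem exists_rel_mem_minReps (E : Setoid ℕ) (x : ℕ) : ∃ m ∈ minReps E, E.r m x := by
  obtain ⟨m, hm, hmin⟩ := wellFounded_lt.has_min {y | E.r y x} ⟨x, E.refl x⟩
  exact ⟨m, fun y hy => not_lt.1 (hmin y (E.trans (E.symm hy) hm)), hm⟩

theorem infinite_minReps {E : Setoid ℕ} (hE : (classes E).Infinite) : (minReps E).Infinite := by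
  refine (hE.mono ?_).of_image (fun x => {y | E.r x y})
  rintro _ ⟨x, rfl⟩
  obtain ⟨m, hm, hmx⟩ := exists_rel_mem_minReps E x
  exact ⟨m, hm, ext fun y => ⟨E.trans (E.symm hmx), E.trans hmx⟩⟩

theorem exists_rel_pRep {E : Setoid ℕ} (hE : (minReps E).Infinite) (x : ℕ) :
    ∃ k, E.r (pRep E k) x := by
  obtain ⟨m, hm, hmx⟩ := exists_rel_mem_minReps E x
  obtain ⟨k, rfl⟩ : m ∈ range (pRep E) := (Nat.range_nth_of_infinite hE).symm ▸ hm
  exact ⟨k, hmx⟩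

end TypedRigidKer

section RigidCoarsening

theorem exists_type_of_partition {ι α : Type*} {P : ι → Set α}
    (hdisj : ∀ i j, i ≠ j → Disjoint (P i) (P j)) (hcov : ⋃ i, P i = univ) :
    ∃ τ : α → ι, ∀ x i, x ∈ P i ↔ τ x = i := by
  choose τ hτ using fun x => mem_iUnion.1 (hcov.ge (mem_univ x))
  refine ⟨τ, fun x i => ⟨fun hx => ?_, fun h => h ▸ hτ x⟩⟩
  by_contra hne
  exact disjoint_left.1 (hdisj _ _ hne) (hτ x) hx

variable {l : ℕ} {hl : 0 < l} {P : Fin l → Set ℕ} {τ : ℕ → Fin l} {u q : ℕ → ℕ}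

theorem TypedRigid.ker_mem_EPalt' (hu : TypedRigid l (fun x => τ x) u)
    (hτ : ∀ x i, x ∈ P i ↔ τ x = i) : Setoid.ker u ∈ EPalt' l hl P := by
  refine ⟨⟨hu.infinite_classes_ker, fun k => (hτ _ _).2 (Fin.ext ?_)⟩, fun x hx i hi y hxy => ?_⟩
  · rw [hu.pRep_ker]
    exact hu.type_first k
  · refine ⟨τ y, ?_, (hτ _ _).2 rfl⟩
    obtain ⟨k, rfl⟩ := hu.minReps_ker ▸ hx
    rw [← (hτ _ _).1 hi, Fin.le_def, hu.type_first]
    have hyk : u y = k := hxy.symm.trans (hu.apply_first k)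
    exact hyk ▸ hu.mod_le y

theorem exists_typedRigid_of_mem_EPalt' (hτ : ∀ x i, x ∈ P i ↔ τ x = i) {E : Setoid ℕ}
    (hE : E ∈ EPalt' l hl P) : ∃ u, TypedRigid l (fun x => τ x) u ∧ E = Setoid.ker u := by
  obtain ⟨⟨hinf, halt⟩, hclass⟩ := hE
  have hminf := infinite_minReps hinf
  have hmono : StrictMono (pRep E) := Nat.nth_strictMono hminf
  have hmin (k : ℕ) : pRep E k ∈ minReps E := Nat.nth_mem_of_infinite hminf k
  have type_pRep (k : ℕ) : (τ (pRep E k) : ℕ) = k % l := congrArg Fin.val ((hτ _ _).1 (halt k))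
  choose u hu using exists_rel_pRep hminf
  have u_pRep (k : ℕ) : u (pRep E k) = k := hmono.injective <|
    (hmin _ _ (hu _)).antisymm (hmin _ _ (E.symm (hu _)))
  refine ⟨u, ⟨fun k => ⟨pRep E k, u_pRep k, fun y hy => ?_, type_pRep k⟩, fun x => ?_⟩, ?_⟩
  · exact hmono.lt_iff_lt.1 ((hmin _ _ (hu y)).trans_lt hy)
  · obtain ⟨j, hj, hx⟩ := hclass _ (hmin (u x)) _ (halt (u x)) x (hu x)
    rw [(hτ _ _).1 hx]
    exact hj
  · refine Setoid.ext fun x y => ⟨fun hxy => ?_, fun hxy => ?_⟩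
    · have hxy' := E.trans (hu x) (E.trans hxy (E.symm (hu y)))
      exact hmono.injective ((hmin _ _ hxy').antisymm (hmin _ _ (E.symm hxy')))
    · have hy := hu y
      rw [← show u x = u y from hxy] at hy
      exact E.trans (E.symm (hu x)) hy

/-- The reduction of `ker q` coded by the member `g` of the rigid monoid. -/
def rigidCoarsening (hτ : ∀ x i, x ∈ P i ↔ τ x = i) (hq : TypedRigid l (fun x => τ x) q)
    (g : rigidMonoid l) : EPalt' l hl P :=
  ⟨Setoid.ker (g.1 ∘ q), (TypedRigid.comp g.2 hq).ker_mem_EPalt' hτ⟩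

variable (hτ : ∀ x i, x ∈ P i ↔ τ x = i) (hq : TypedRigid l (fun x => τ x) q)

theorem coarsens_rigidCoarsening (g : rigidMonoid l) :
    Coarsens (rigidCoarsening (hl := hl) hτ hq g).1 (Setoid.ker q) :=
  coarsens_ker_comp g.1 q

theorem exists_eq_rigidCoarsening_mul {g : rigidMonoid l} {F : EPalt' l hl P}
    (hF : Coarsens F.1 (rigidCoarsening (hl := hl) hτ hq g).1) :
    ∃ h, F = rigidCoarsening hτ hq (h * g) := by
  obtain ⟨u, hu, hFu⟩ := exists_typedRigid_of_mem_EPalt' hτ F.2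
  rw [hFu] at hF
  obtain ⟨hh, heq⟩ := (TypedRigid.comp g.2 hq).exists_eq_comp hu hF
  exact ⟨⟨_, hh⟩, Subtype.ext (hFu.trans (congrArg Setoid.ker heq))⟩

open scoped Topology in
theorem continuous_rigidCoarsening (hN : IsRamseySequence (rigidStabilizer l)) :
    Continuous[hN.topology, ellentuckTop (EPalt' l hl P)] (rigidCoarsening hτ hq) := by
  let := hN.topology
  refine continuous_generateFrom_iff.2 ?_
  rintro _ ⟨a, B, rfl⟩ A ⟨hcoarse, n, rfl⟩
  refine ⟨n, fun h hh => ⟨?_, n, ?_⟩⟩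
  · exact (coarsens_ker_comp h.1 (A.1 ∘ q)).trans hcoarse
  · exact TypedRigid.approx_ker_comp h.2 (TypedRigid.comp A.2 hq) (mem_rigidStabilizer.1 hh)

end RigidCoarsening

theorem EPalt'SouslinColouring_general {κ : Type*} [Finite κ]
    (l : ℕ) (hl : 0 < l) (P : Fin l → Set ℕ)
    (hdisj : ∀ i j, i ≠ j → Disjoint (P i) (P j))
    (hcov : ⋃ i, P i = Set.univ)
    (c : ↥(EPalt' l hl P) → κ)
    (hc : ∀ i : κ, SouslinMeasurable (ellentuckTop (EPalt' l hl P)) {E | c E = i})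
    (E : ↥(EPalt' l hl P)) :
    ∃ F : ↥(EPalt' l hl P), Coarsens F.1 E.1 ∧
      ∀ F₁ F₂ : ↥(EPalt' l hl P), Coarsens F₁.1 F.1 → Coarsens F₂.1 F.1 → c F₁ = c F₂ := by
  have : NeZero l := ⟨hl.ne'⟩
  obtain ⟨τ, hτ⟩ := exists_type_of_partition hdisj hcov
  obtain ⟨q, hq, hE⟩ := exists_typedRigid_of_mem_EPalt' hτ E.2
  have hN := isRamseySequence_rigidStabilizer l
  have hcN (i : κ) : RamseyFor (rigidStabilizer l) (c ∘ rigidCoarsening hτ hq ⁻¹' {i}) :=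
    (hc i).ramseyFor_preimage hN (continuous_rigidCoarsening hτ hq hN)
  obtain ⟨g, -, i, hi⟩ := RamseyFor.leftCofinal_exists_accepts_fiber hcN 0 1
  rw [mul_one] at hi
  have color_eq (F : EPalt' l hl P) (hF : Coarsens F.1 (rigidCoarsening (hl := hl) hτ hq g).1) :
      c F = i := by
    obtain ⟨h, rfl⟩ := exists_eq_rigidCoarsening_mul hτ hq hF
    exact hi h (mem_rigidStabilizer_zero h)
  exact ⟨rigidCoarsening hτ hq g, hE ▸ coarsens_rigidCoarsening hτ hq g,
    fun F₁ F₂ h₁ h₂ => (color_eq F₁ h₁).trans (color_eq F₂ h₂).symm⟩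

/-- **Corollary 3.5:** for every finite Souslin measurable colouring of `𝓔^{P'}_∞`
and every `E` in the space, there is a coarsening `F ≤ E` in the space such that
the colouring is constant on `𝓔^{P'}_∞ ↾ F`. -/
theorem EPalt'SouslinColouring
    (l : ℕ) (hl : 0 < l) (P : Fin l → Set ℕ)
    (hinf : ∀ i, (P i).Infinite)
    (hdisj : ∀ i j, i ≠ j → Disjoint (P i) (P j))
    (hcov : ⋃ i, P i = Set.univ)
    (hmin : ∀ i j : Fin l, i < j → sInf (P i) < sInf (P j))
    (m : ℕ) (c : ↥(EPalt' l hl P) → Fin m)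
    (hc : ∀ i : Fin m, SouslinMeasurable (ellentuckTop (EPalt' l hl P)) {E | c E = i})
    (E : ↥(EPalt' l hl P)) :
    ∃ F : ↥(EPalt' l hl P), Coarsens F.1 E.1 ∧
      ∀ F₁ F₂ : ↥(EPalt' l hl P), Coarsens F₁.1 F.1 → Coarsens F₂.1 F.1 → c F₁ = c F₂ :=
  EPalt'SouslinColouring_general l hl P hdisj hcov c hc E

end DualRamsey
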